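/- Fix γ > 0 and 1 ≤ p ≤ ∞. The differential operator d/dx is hypercyclic on (C^∞([0,γ]), ρ_p): there exists f ∈ C^∞([0,γ]) whose orbit {f, f', f'', …} = {d^n f/dx^n : n ∈ ℕ} is dense in (C^∞([0,γ]), ρ_p). -/

import Mathlib

open MeasureTheory Set Filter
open scoped ENNReal Topology

/-- The `L^p` distance of two functions over the interval `[a, b]`. -/
noncomputable def rho (a b : ℝ) (p : ℝ≥0∞) (f g : ℝ → ℝ) : ℝ :=
  (eLpNorm (fun x => f x - g x) p (volume.restrict (Icc a b))).toReal

/-!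
On exponential generating functions `∑ aₘ xᵐ / m!`, differentiation is the backward shift of the
coefficients. Given sequences `b₀, b₁, …` of coefficients of entire functions, let `a` copy an
initial segment of some `bᵢ` onto each dyadic block `[2ᵏ, 2ᵏ⁺¹)`, every `i` being used for
infinitely many `k`, with the entries exceeding `2ᵐ` in norm replaced by `0`. The `2ᵏ`-th shift of
`a` has `j`-th entry at most `2 ^ (j + 2ᵏ) ≤ 4ʲ` once `j ≥ 2ᵏ`, so along the `k` using `bᵢ` the
shifts of `a` are dominated and converge entrywise to `bᵢ`; hence the derivatives of the generating
function of `a` approach that of `bᵢ` locally uniformly. Taking for `bᵢ` the coefficients of a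
dense sequence of polynomials gives density in `C(ℝ, ℝ)`.
-/

section ExponentialGeneratingFunction

variable {𝕜 : Type*} [RCLike 𝕜] {a b : ℕ → 𝕜}

/-- The exponential generating function `x ↦ ∑ aₘ xᵐ / m!` of a sequence; it is `0` wherever the
series diverges. -/
noncomputable def egf (a : ℕ → 𝕜) (x : 𝕜) : 𝕜 := ∑' m, a m * x ^ m / (m.factorial : 𝕜)

/-- The exponential generating function of `a` is entire: its series converges everywhere. -/
def EntireEGF (a : ℕ → 𝕜) : Prop := ∀ x, Summable fun m => a m * x ^ m / (m.factorial : 𝕜)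

namespace EntireEGF

lemma norm (ha : EntireEGF a) : EntireEGF fun m => ‖a m‖ := fun R =>
  .of_norm <| by simpa using (ha (R : 𝕜)).norm

lemma of_norm_le {B : ℕ → ℝ} (hB : EntireEGF B) (h : ∀ m, ‖a m‖ ≤ B m) : EntireEGF a := fun x =>
  .of_norm_bounded (hB ‖x‖) fun m => by
    rw [norm_div, norm_mul, norm_pow, RCLike.norm_natCast]
    gcongr
    exact h m

lemma add (ha : EntireEGF a) (hb : EntireEGF b) : EntireEGF fun m => a m + b m := fun x => by
  simpa only [add_mul, add_div] using (ha x).add (hb x)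

lemma sub (ha : EntireEGF a) (hb : EntireEGF b) : EntireEGF fun m => a m - b m := fun x => by
  simpa only [sub_mul, sub_div] using (ha x).sub (hb x)

lemma geometric (r : 𝕜) : EntireEGF fun m => r ^ m := fun x => by
  simpa only [mul_pow] using NormedSpace.expSeries_div_summable (r * x)

lemma hasFPowerSeriesOnBall (ha : EntireEGF a) :
    HasFPowerSeriesOnBall (egf a)
      (.ofScalars 𝕜 fun m => a m / (m.factorial : 𝕜)) 0 ∞ := by
  set p : FormalMultilinearSeries 𝕜 𝕜 𝕜 := .ofScalars 𝕜 fun m => a m / (m.factorial : 𝕜) with hp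
  have radius_eq : p.radius = ∞ := p.radius_eq_top_of_summable_norm fun r => by
    simpa [hp, div_mul_eq_mul_div] using ha.norm (r : ℝ)
  have sum_eq : p.sum = egf a := funext fun x => tsum_congr fun m => by
    rw [hp, FormalMultilinearSeries.ofScalars_apply_eq, smul_eq_mul, div_mul_eq_mul_div]
  simpa only [radius_eq, sum_eq] using p.hasFPowerSeriesOnBall (by simp [radius_eq])

lemma analyticOnNhd_egf (ha : EntireEGF a) : AnalyticOnNhd 𝕜 (egf a) univ := by
  simpa using ha.hasFPowerSeriesOnBall.analyticOnNhd

lemma hasSum_deriv_egf (ha : EntireEGF a) (x : 𝕜) :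
    HasSum (fun m => a (m + 1) * x ^ m / (m.factorial : 𝕜)) (deriv (egf a) x) := by
  have hasSum_fderiv := ha.hasFPowerSeriesOnBall.fderiv.hasSum (y := x) (by simp)
  rw [zero_add] at hasSum_fderiv
  convert! hasSum_fderiv.mapL (ContinuousLinearMap.apply 𝕜 𝕜 (1 : 𝕜)) using 2 with m
  suffices a (m + 1) * x ^ m / (m.factorial : 𝕜) =
      x ^ m * ((m + 1) * (a (m + 1) / ((m + 1).factorial : 𝕜))) by simpa using this
  have factorial_ne_zero : (m.factorial : 𝕜) ≠ 0 := mod_cast m.factorial_ne_zero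
  have succ_ne_zero : (m + 1 : 𝕜) ≠ 0 := mod_cast m.succ_ne_zero
  rw [Nat.factorial_succ, Nat.cast_mul, Nat.cast_succ]
  field_simp

lemma shift (ha : EntireEGF a) : EntireEGF fun m => a (m + 1) := fun x =>
  (ha.hasSum_deriv_egf x).summable

lemma deriv_egf (ha : EntireEGF a) : deriv (egf a) = egf fun m => a (m + 1) :=
  funext fun x => (ha.hasSum_deriv_egf x).tsum_eq.symm

lemma iterate_deriv_egf (ha : EntireEGF a) (n : ℕ) :
    deriv^[n] (egf a) = egf fun m => a (m + n) := by
  induction n generalizing a with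
  | zero => rfl
  | succ n ih =>
    rw [Function.iterate_succ_apply, ha.deriv_egf, ih ha.shift]
    simp only [add_assoc]

lemma norm_egf_sub_egf_le (ha : EntireEGF a) (hb : EntireEGF b) {x : 𝕜} {R : ℝ} (hx : ‖x‖ ≤ R) :
    ‖egf a x - egf b x‖ ≤ egf (fun m => ‖a m - b m‖) R := by
  rw [egf, egf, ← (ha x).tsum_sub (hb x)]
  refine tsum_of_norm_bounded ((ha.sub hb).norm R).hasSum fun m => ?_
  rw [← sub_div, ← sub_mul, norm_div, norm_mul, norm_pow, RCLike.norm_natCast]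
  gcongr

end EntireEGF

lemma tendsto_egf_of_dominated {ι : Type*} {l : Filter ι} {A : ι → ℕ → 𝕜} {B : ℕ → ℝ}
    (hB : EntireEGF B) (hAB : ∀ᶠ i in l, ∀ m, ‖A i m‖ ≤ B m)
    (hA : ∀ m, Tendsto (A · m) l (𝓝 (b m))) (x : 𝕜) :
    Tendsto (fun i => egf (A i) x) l (𝓝 (egf b x)) := by
  refine tendsto_tsum_of_dominated_convergence (hB ‖x‖)
    (fun m => ((hA m).mul_const _).div_const _) (hAB.mono fun i hi m => ?_)
  rw [norm_div, norm_mul, norm_pow, RCLike.norm_natCast]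
  gcongr
  exact hi m

lemma tendstoLocallyUniformly_egf_of_dominated {ι : Type*} {l : Filter ι} {A : ι → ℕ → 𝕜}
    {B : ℕ → ℝ} (hB : EntireEGF B) (hb : EntireEGF b) (hAB : ∀ᶠ i in l, ∀ m, ‖A i m‖ ≤ B m)
    (hA : ∀ m, Tendsto (A · m) l (𝓝 (b m))) :
    TendstoLocallyUniformly (fun i => egf (A i)) (egf b) l := by
  refine tendstoLocallyUniformly_iff_forall_isCompact.2 fun K hK =>
    Metric.tendstoUniformlyOn_iff.2 fun ε hε => ?_
  obtain ⟨R, hR⟩ := hK.isBounded.exists_norm_le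
  have majorant_tendsto : Tendsto (fun i => egf (fun m => ‖A i m - b m‖) R) l (𝓝 0) := by
    have dominated : ∀ᶠ i in l, ∀ m, ‖‖A i m - b m‖‖ ≤ B m + ‖b m‖ := hAB.mono fun i hi m =>
      (norm_norm _).trans_le <| (norm_sub_le _ _).trans <| by gcongr; exact hi m
    have := tendsto_egf_of_dominated (b := 0) (hB.add hb.norm) dominated
      (fun m => tendsto_iff_norm_sub_tendsto_zero.1 (hA m)) R
    simpa [egf] using this
  filter_upwards [hAB, majorant_tendsto.eventually_lt_const hε] with i hi hlt x hx
  rw [dist_comm, dist_eq_norm]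
  exact ((hB.of_norm_le hi).norm_egf_sub_egf_le hb (hR x hx)).trans_lt hlt

end ExponentialGeneratingFunction

section Universal

variable {𝕜 : Type*} [RCLike 𝕜]

/-- The sequence that lists, on the `k`-th dyadic block `[2 ^ k, 2 ^ (k + 1))`, the first `2 ^ k`
entries of `b i`, where `i` is the first component of the pair coded by `k`, except that an entry
landing at position `m` is replaced by `0` if its norm exceeds `2 ^ m`. -/
noncomputable def dyadicBlocks (b : ℕ → ℕ → 𝕜) (m : ℕ) : 𝕜 :=
  let k := Nat.log 2 m
  let entry := b k.unpair.1 (m - 2 ^ k)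
  if ‖entry‖ ≤ 2 ^ m then entry else 0

lemma norm_dyadicBlocks_le (b : ℕ → ℕ → 𝕜) (m : ℕ) : ‖dyadicBlocks b m‖ ≤ 2 ^ m := by
  simp only [dyadicBlocks]
  split_ifs with h
  · exact h
  · simp

lemma entireEGF_dyadicBlocks (b : ℕ → ℕ → 𝕜) : EntireEGF (dyadicBlocks b) :=
  (EntireEGF.geometric 2).of_norm_le (norm_dyadicBlocks_le b)

lemma dyadicBlocks_add_two_pow (b : ℕ → ℕ → 𝕜) {j k : ℕ} (hj : j < 2 ^ k) :
    dyadicBlocks b (j + 2 ^ k) =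
      if ‖b k.unpair.1 j‖ ≤ 2 ^ (j + 2 ^ k) then b k.unpair.1 j else 0 := by
  have log_eq : Nat.log 2 (j + 2 ^ k) = k :=
    Nat.log_eq_of_pow_le_of_lt_pow (by lia) (by rw [pow_succ]; lia)
  simp only [dyadicBlocks, log_eq, Nat.add_sub_cancel]

lemma norm_dyadicBlocks_add_two_pow_le (b : ℕ → ℕ → 𝕜) (j k : ℕ) :
    ‖dyadicBlocks b (j + 2 ^ k)‖ ≤ ‖b k.unpair.1 j‖ + 4 ^ j := by
  rcases lt_or_ge j (2 ^ k) with hj | hj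
  · rw [dyadicBlocks_add_two_pow b hj]
    split_ifs
    · simp
    · rw [norm_zero]
      positivity
  · calc ‖dyadicBlocks b (j + 2 ^ k)‖ ≤ 2 ^ (j + 2 ^ k) := norm_dyadicBlocks_le b _
      _ ≤ 2 ^ (j + j) := by gcongr; exact one_le_two
      _ = 4 ^ j := by rw [← two_mul, pow_mul]; norm_num
      _ ≤ ‖b k.unpair.1 j‖ + 4 ^ j := le_add_of_nonneg_left (norm_nonneg _)

lemma tendsto_two_pow_pair (i : ℕ) : Tendsto (fun l => 2 ^ Nat.pair i l) atTop atTop :=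
  tendsto_atTop_mono (fun l => (Nat.right_le_pair i l).trans Nat.lt_two_pow_self.le) tendsto_id

lemma tendsto_dyadicBlocks_add_two_pow (b : ℕ → ℕ → 𝕜) (i j : ℕ) :
    Tendsto (fun l => dyadicBlocks b (j + 2 ^ Nat.pair i l)) atTop (𝓝 (b i j)) := by
  refine tendsto_const_nhds.congr' ?_
  have cutoff_inactive : ∀ᶠ n : ℕ in atTop, ‖b i j‖ ≤ 2 ^ (j + n) :=
    ((tendsto_pow_atTop_atTop_of_one_lt one_lt_two).comp
      (tendsto_add_atTop_nat j)).eventually_ge_atTop _ |>.mono fun n hn => by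
        simpa only [Function.comp_apply, add_comm j] using hn
  filter_upwards [(tendsto_two_pow_pair i).eventually_gt_atTop j,
    (tendsto_two_pow_pair i).eventually cutoff_inactive] with l hj hnorm
  rw [dyadicBlocks_add_two_pow b hj, Nat.unpair_pair, if_pos hnorm]

theorem tendstoLocallyUniformly_iterate_deriv_egf_dyadicBlocks {b : ℕ → ℕ → 𝕜} {i : ℕ}
    (hb : EntireEGF (b i)) :
    TendstoLocallyUniformly (fun l => deriv^[2 ^ Nat.pair i l] (egf (dyadicBlocks b)))
      (egf (b i)) atTop := by
  simp only [(entireEGF_dyadicBlocks b).iterate_deriv_egf]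
  refine tendstoLocallyUniformly_egf_of_dominated (hb.norm.add (.geometric 4)) hb
    (.of_forall fun l j => ?_) (tendsto_dyadicBlocks_add_two_pow b i)
  simpa only [Nat.unpair_pair] using norm_dyadicBlocks_add_two_pow_le b j (Nat.pair i l)

end Universal

section Density

open Polynomial

lemma hasSum_egf_polynomial {𝕜 : Type*} [RCLike 𝕜] (q : 𝕜[X]) (x : 𝕜) :
    HasSum (fun m => (m.factorial * q.coeff m) * x ^ m / (m.factorial : 𝕜)) (q.eval x) := by
  have cancel_factorial : ∀ m : ℕ,
      (m.factorial * q.coeff m) * x ^ m / (m.factorial : 𝕜) = q.coeff m * x ^ m := fun m => by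
    rw [mul_assoc, mul_div_cancel_left₀ _ (mod_cast m.factorial_ne_zero)]
  simp only [cancel_factorial, eval_eq_sum]
  refine hasSum_sum_of_ne_finset_zero fun m hm => ?_
  rw [notMem_support_iff.1 hm, zero_mul]

lemma dense_of_separatesPoints {X : Type*} [TopologicalSpace X] {A : Subalgebra ℝ C(X, ℝ)}
    (hA : A.SeparatesPoints) : Dense (A : Set C(X, ℝ)) := fun g => by
  refine (mem_closure_iff_nhds_basis <| nhds_basis_uniformity
    Metric.uniformity_basis_dist.compactConvergenceUniformity).2 fun ⟨K, ε⟩ ⟨hK, hε⟩ => ?_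
  exact ContinuousMap.exists_mem_subalgebra_near_continuous_of_isCompact_of_separatesPoints
    hA g hK hε

lemma denseRange_toContinuousMap : DenseRange (toContinuousMap : ℝ[X] → C(ℝ, ℝ)) := by
  have separates : (toContinuousMapAlgHom (R := ℝ)).range.SeparatesPoints := fun x y hxy =>
    ⟨_, ⟨_, ⟨X, rfl⟩, rfl⟩, by simpa using hxy⟩
  exact dense_of_separatesPoints separates

lemma exists_seq_denseRange_comp {α X : Type*} [TopologicalSpace X] [SecondCountableTopology X]
    [Nonempty α] {f : α → X} (hf : DenseRange f) : ∃ u : ℕ → α, DenseRange (f ∘ u) := by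
  let v : ℕ → range f := TopologicalSpace.denseSeq (range f)
  choose u hu using fun i => (v i).2
  refine ⟨u, ?_⟩
  have hv : DenseRange (Subtype.val ∘ v) :=
    hf.denseRange_val.comp (TopologicalSpace.denseRange_denseSeq _) continuous_subtype_val
  exact (funext hu : f ∘ u = Subtype.val ∘ v) ▸ hv

/-- **MacLane's theorem** on the real line. -/
theorem exists_analyticOnNhd_denseRange_iterate_deriv :
    ∃ f : ℝ → ℝ, AnalyticOnNhd ℝ f univ ∧
      ∃ F : ℕ → C(ℝ, ℝ), (∀ n, ⇑(F n) = deriv^[n] f) ∧ DenseRange F := by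
  obtain ⟨q, hq⟩ := exists_seq_denseRange_comp denseRange_toContinuousMap
  let b : ℕ → ℕ → ℝ := fun i m => m.factorial * (q i).coeff m
  have hb : ∀ i, EntireEGF (b i) := fun i x => (hasSum_egf_polynomial (q i) x).summable
  have egf_b : ∀ i, egf (b i) = (q i).toContinuousMap := fun i =>
    funext fun x => (hasSum_egf_polynomial (q i) x).tsum_eq
  set f : ℝ → ℝ := egf (dyadicBlocks b)
  have hf : AnalyticOnNhd ℝ f univ := (entireEGF_dyadicBlocks b).analyticOnNhd_egf
  let F : ℕ → C(ℝ, ℝ) := fun n => ⟨deriv^[n] f, (hf.iterated_deriv n).continuous⟩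
  refine ⟨f, hf, F, fun _ => rfl, dense_closure.1 (hq.mono ?_)⟩
  rintro _ ⟨i, rfl⟩
  have subsequence_tendsto : Tendsto (fun l => F (2 ^ Nat.pair i l)) atTop
      (𝓝 (q i).toContinuousMap) :=
    ContinuousMap.tendsto_of_tendstoLocallyUniformly <|
      egf_b i ▸ tendstoLocallyUniformly_iterate_deriv_egf_dyadicBlocks (hb i)
  exact mem_closure_of_tendsto subsequence_tendsto (.of_forall fun l => mem_range_self _)

end Density

section Rho

variable {a b : ℝ} {p : ℝ≥0∞}

lemma rho_le_of_forall_abs_sub_le {f g : ℝ → ℝ} {δ : ℝ} (hδ : 0 ≤ δ)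
    (h : ∀ x ∈ Icc a b, |f x - g x| ≤ δ) :
    rho a b p f g ≤ volume.real (Icc a b) ^ p.toReal⁻¹ * δ := by
  have ae_le : ∀ᵐ x ∂volume.restrict (Icc a b), ‖f x - g x‖ ≤ δ :=
    (ae_restrict_mem measurableSet_Icc).mono h
  have eLpNorm_le := eLpNorm_le_of_ae_bound (p := p) ae_le
  rw [Measure.restrict_apply_univ] at eLpNorm_le
  have := ENNReal.toReal_mono (ENNReal.mul_ne_top (ENNReal.rpow_ne_top_of_nonneg (by positivity)
    measure_Icc_lt_top.ne) ENNReal.ofReal_ne_top) eLpNorm_le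
  rwa [ENNReal.toReal_mul, ← ENNReal.toReal_rpow, ENNReal.toReal_ofReal hδ] at this

lemma eventually_rho_lt (g : C(ℝ, ℝ)) {ε : ℝ} (hε : 0 < ε) :
    ∀ᶠ h : C(ℝ, ℝ) in 𝓝 g, rho a b p h g < ε := by
  obtain ⟨δ, hδ, hδε⟩ := exists_pos_mul_lt hε (volume.real (Icc a b) ^ p.toReal⁻¹)
  have close_on_Icc := Metric.tendstoUniformlyOn_iff.1
    (ContinuousMap.tendsto_iff_forall_isCompact_tendstoUniformlyOn.1 (tendsto_id (x := 𝓝 g)) _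
      (isCompact_Icc (a := a) (b := b))) δ hδ
  filter_upwards [close_on_Icc] with h hh
  refine (rho_le_of_forall_abs_sub_le hδ.le fun x hx => ?_).trans_lt hδε
  rw [← Real.dist_eq, dist_comm]
  exact (hh x hx).le

end Rho

theorem stmt6_general :
    ∃ f : ℝ → ℝ, AnalyticOnNhd ℝ f univ ∧
      ∀ g : ℝ → ℝ, Continuous g → ∀ (a b : ℝ) (p : ℝ≥0∞), p ≠ 0 → ∀ ε > (0 : ℝ),
        ∃ n : ℕ, rho a b p (deriv^[n] f) g < ε := by
  obtain ⟨f, hf, F, hF, dense_F⟩ := exists_analyticOnNhd_denseRange_iterate_deriv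
  refine ⟨f, hf, fun g hg a b p _ ε hε => ?_⟩
  obtain ⟨_, hlt, n, rfl⟩ := mem_closure_iff_nhds.1 (dense_F ⟨g, hg⟩) _ (eventually_rho_lt _ hε)
  exact ⟨n, hF n ▸ hlt⟩

/-- Fix `γ > 0` and `1 ≤ p ≤ ∞`. The differential operator `d/dx` is
hypercyclic on `(C^∞([0, γ]), ρ_p)`: there is a smooth function `f` whose orbit
`{dⁿf/dxⁿ : n ∈ ℕ}` is dense in `(C^∞([0, γ]), ρ_p)`. -/
theorem stmt6 (γ : ℝ) (hγ : 0 < γ) (p : ℝ≥0∞) (hp : 1 ≤ p) :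
    ∃ f : ℝ → ℝ, ContDiff ℝ (⊤ : ℕ∞) f ∧
      ∀ g : ℝ → ℝ, ContDiff ℝ (⊤ : ℕ∞) g → ∀ ε > (0 : ℝ),
        ∃ n : ℕ, rho 0 γ p (deriv^[n] f) g < ε := by
  obtain ⟨f, hf, dense_orbit⟩ := stmt6_general
  exact ⟨f, hf.contDiff, fun g hg =>
    dense_orbit g hg.continuous 0 γ p (zero_lt_one.trans_le hp).ne'⟩
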